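/- Let X be a Banach space, (x_n) a weakly Cauchy sequence in X that is not weakly convergent, and (r_n) the Rademacher functions on [0,1]. Then the set {r_n x_n : n ∈ ℕ} is relatively weakly compact in L¹([0,1],X) but is not a δS-set. Consequently, if X is not weakly sequentially complete then X fails property (δS_λ). -/

import Mathlib

/-!
For `Φ ∈ L¹(μ, X)*` and `y ∈ X`, the functional `f ↦ Φ (f ⊗ y)` has a density `T y` bounded by
`‖Φ‖ ‖y‖`, linear in `y`. Countably many inequalities between rational combinations show that for
almost every `t` the sequence `(T xₙ (t))ₙ` is `(φ (xₙ))ₙ` for a single `φ ∈ X*`, so it converges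
when `(xₙ)` is weakly Cauchy. Hence `Φ (rₙ xₙ) = ∫ rₙ T xₙ` tends to `0` for every weakly null
bounded sequence `(rₙ)`, and `(rₙ xₙ)` is weakly null. If `{rₙ xₙ}` were a δS-set, some weakly
compact `W` would be hit with positive measure by every `rₙ xₙ`; as `rₙ = ±1` almost everywhere,
`xₙ ∈ W ∪ -W` for all `n`, and a weak cluster point of a weakly Cauchy sequence is its weak limit.
-/

open MeasureTheory Filter Set ENNReal Pointwise

noncomputable section

def IsWeaklyCompact {X : Type*} [NormedAddCommGroup X] [NormedSpace ℝ X] (W : Set X) : Prop :=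
  IsCompact (toWeakSpace ℝ X '' W)

def IsRelWeaklyCompact {X : Type*} [NormedAddCommGroup X] [NormedSpace ℝ X] (W : Set X) : Prop :=
  IsCompact (closure (toWeakSpace ℝ X '' W))

variable {Ω : Type*} [MeasurableSpace Ω] {X : Type*} [NormedAddCommGroup X] [NormedSpace ℝ X]

/-- A set of functions in `L¹(μ,X)` is uniformly integrable if it is bounded and the integrals
of the norms over small sets are uniformly small. -/
def UnifIntegrableSet (μ : Measure Ω) (K : Set (Lp X 1 μ)) : Prop :=
  (∃ C : ℝ, ∀ f ∈ K, ‖f‖ ≤ C) ∧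
  ∀ ε : ℝ, 0 < ε → ∃ δ : ℝ, 0 < δ ∧ ∀ f ∈ K, ∀ A : Set Ω, μ A ≤ ENNReal.ofReal δ →
    ∫ ω in A, ‖(f : Ω → X) ω‖ ∂μ ≤ ε

/-- `K ⊆ L¹(μ,X)` is a δS-set if it is uniformly integrable and for every `δ > 0` there is a
weakly compact `W ⊆ X` with `μ (f ⁻¹' W) ≥ 1 - δ` for all `f ∈ K`. -/
def IsDeltaSSet (μ : Measure Ω) (K : Set (Lp X 1 μ)) : Prop :=
  UnifIntegrableSet μ K ∧
  ∀ δ : ℝ, 0 < δ → ∃ W : Set X, IsWeaklyCompact W ∧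
    ∀ f ∈ K, 1 - ENNReal.ofReal δ ≤ μ ((f : Ω → X) ⁻¹' W)

/-- A Banach space `X` has property (δSμ) if every relatively weakly compact subset of
`L¹(μ,X)` is a δS-set. -/
def DeltaSProp (μ : Measure Ω) (X : Type*) [NormedAddCommGroup X] [NormedSpace ℝ X] : Prop :=
  ∀ K : Set (Lp X 1 μ), IsRelWeaklyCompact K → IsDeltaSSet μ K

/-- The `n`-th Rademacher function `t ↦ sign (sin (2ⁿ π t))` on `[0,1]`. -/
def rademacher (n : ℕ) (t : ℝ) : ℝ := Real.sign (Real.sin (2 ^ n * Real.pi * t))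

open scoped Topology

section WeakTopology

/-- A sequence is weakly Cauchy if every continuous linear functional converges along it. -/
def IsWeaklyCauchySeq (x : ℕ → X) : Prop :=
  ∀ φ : X →L[ℝ] ℝ, ∃ L : ℝ, Tendsto (fun n => φ (x n)) atTop (𝓝 L)

lemma tendsto_toWeakSpace_iff {ι : Type*} {l : Filter ι} {x : ι → X} {y : X} :
    Tendsto (fun i => toWeakSpace ℝ X (x i)) l (𝓝 (toWeakSpace ℝ X y)) ↔
      ∀ φ : X →L[ℝ] ℝ, Tendsto (fun i => φ (x i)) l (𝓝 (φ y)) := by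
  refine WeakBilin.tendsto_iff_forall_eval_tendsto (topDualPairing ℝ X).flip fun u v huv => ?_
  exact SeparatingDual.eq_iff_forall_dual_eq (R := ℝ) |>.2 (LinearMap.congr_fun huv)

lemma isRelWeaklyCompact_range_of_tendsto {x : ℕ → X} {y : X}
    (hx : ∀ φ : X →L[ℝ] ℝ, Tendsto (fun n => φ (x n)) atTop (𝓝 (φ y))) :
    IsRelWeaklyCompact (range x) := by
  refine (tendsto_toWeakSpace_iff.2 hx).isCompact_insert_range.closure_of_subset ?_
  rw [← range_comp]
  exact subset_insert _ _

lemma IsWeaklyCompact.union_neg {W : Set X} (hW : IsWeaklyCompact W) :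
    IsWeaklyCompact (W ∪ -W) := by
  have h := IsCompact.union hW (IsCompact.neg hW)
  rwa [← image_neg_eq_neg, ← image_comm (fun y => map_neg (toWeakSpace ℝ X) y),
    image_neg_eq_neg, ← image_union] at h

namespace IsWeaklyCauchySeq

variable {x : ℕ → X}

lemma exists_norm_le (hx : IsWeaklyCauchySeq x) : ∃ C, ∀ n, ‖x n‖ ≤ C := by
  have hpointwise (φ : StrongDual ℝ X) :
      ∃ C, ∀ n, ‖NormedSpace.inclusionInDoubleDual ℝ X (x n) φ‖ ≤ C := by
    obtain ⟨L, hL⟩ := hx φ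
    obtain ⟨C, hC⟩ := hL.norm.bddAbove_range
    exact ⟨C, fun n => hC ⟨n, rfl⟩⟩
  obtain ⟨C, hC⟩ := banach_steinhaus hpointwise
  refine ⟨C, fun n => ?_⟩
  rw [← (NormedSpace.inclusionInDoubleDualLi ℝ (E := X)).norm_map (x n)]
  exact hC n

lemma exists_tendsto_of_frequently_mem (hx : IsWeaklyCauchySeq x) {W : Set X}
    (hW : IsWeaklyCompact W) (hxW : ∃ᶠ n in atTop, x n ∈ W) :
    ∃ y : X, ∀ φ : X →L[ℝ] ℝ, Tendsto (fun n => φ (x n)) atTop (𝓝 (φ y)) := by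
  obtain ⟨_, ⟨y, -, rfl⟩, hy⟩ := IsCompact.exists_mapClusterPt_of_frequently hW
    (hxW.mono fun n hn => mem_image_of_mem (toWeakSpace ℝ X) hn)
  refine ⟨y, fun φ => ?_⟩
  obtain ⟨L, hL⟩ := hx φ
  have hφ : Continuous fun z : WeakSpace ℝ X => φ ((toWeakSpace ℝ X).symm z) :=
    WeakBilin.eval_continuous (topDualPairing ℝ X).flip φ
  have hcluster : ClusterPt (φ y) (map (fun n => φ (x n)) atTop) :=
    MapClusterPt.continuousAt_comp (X := WeakSpace ℝ X) hφ.continuousAt hy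
  rwa [eq_of_nhds_neBot (hcluster.mono hL)]

end IsWeaklyCauchySeq

end WeakTopology

section PointwiseRepresentation

variable {ι : Type*}

lemma exists_dual_forall_apply_eq {𝕜 E : Type*} [RCLike 𝕜] [NormedAddCommGroup E]
    [NormedSpace 𝕜 E] {x : ι → E} {a : ι → 𝕜} {C : ℝ}
    (h : ∀ (s : Finset ι) (c : s → 𝕜), ‖∑ i, c i • a i‖ ≤ C * ‖∑ i, c i • x i‖) :
    ∃ φ : StrongDual 𝕜 E, ∀ i, φ (x i) = a i := by
  let A := Finsupp.linearCombination 𝕜 a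
  let S := Finsupp.linearCombination 𝕜 x
  have hbound (c : ι →₀ 𝕜) : ‖A c‖ ≤ C * ‖S c‖ := by
    have hc := h c.support fun i => c i
    rwa [Finset.sum_coe_sort c.support fun i => c i • a i,
      Finset.sum_coe_sort c.support fun i => c i • x i] at hc
  have hker : A ∈ S.ker.dualAnnihilator := by
    refine (Submodule.mem_dualAnnihilator A).2 fun c hc => norm_le_zero_iff.1 ?_
    simpa [LinearMap.mem_ker.1 hc] using hbound c
  rw [← LinearMap.range_dualMap_eq_dualAnnihilator_ker] at hker
  obtain ⟨ψ, hψ⟩ := hker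
  have hψS (c : ι →₀ 𝕜) : ψ (S c) = A c := LinearMap.congr_fun hψ c
  let ψ₀ : StrongDual 𝕜 S.range := (ψ.domRestrict S.range).mkContinuous C <| by
    rintro ⟨_, c, rfl⟩
    simpa [hψS] using hbound c
  obtain ⟨φ, hφ, -⟩ := exists_extension_norm_eq S.range ψ₀
  refine ⟨φ, fun i => ?_⟩
  have hi : S (Finsupp.single i 1) = x i := by simp [S]
  calc φ (x i) = ψ (S (Finsupp.single i 1)) := by
        rw [← hi]; exact hφ ⟨_, LinearMap.mem_range_self S (Finsupp.single i 1)⟩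
    _ = a i := by rw [hψS]; simp [A]

lemma norm_sum_smul_le_of_forall_rat [Fintype ι] {E F : Type*} [SeminormedAddCommGroup E]
    [NormedSpace ℝ E] [SeminormedAddCommGroup F] [NormedSpace ℝ F] {x : ι → E} {a : ι → F} {C : ℝ}
    (h : ∀ q : ι → ℚ, ‖∑ i, (q i : ℝ) • a i‖ ≤ C * ‖∑ i, (q i : ℝ) • x i‖) (c : ι → ℝ) :
    ‖∑ i, c i • a i‖ ≤ C * ‖∑ i, c i • x i‖ := by
  have hdense : DenseRange (Pi.map fun _ : ι => ((↑) : ℚ → ℝ)) :=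
    DenseRange.piMap fun _ => Rat.denseRange_cast
  refine hdense.induction_on c (isClosed_le (by fun_prop) (by fun_prop)) h

variable {μ : Measure Ω}

lemma coeFn_lp_sum_smul {p : ℝ≥0∞} (s : Finset ι) (c : ι → ℝ) (f : ι → Lp X p μ) :
    ⇑(∑ i ∈ s, c i • f i) =ᵐ[μ] fun t => ∑ i ∈ s, c i • f i t := by
  induction s using Finset.cons_induction with
  | empty => simpa only [Finset.sum_empty] using! Lp.coeFn_zero X p μ
  | cons i s hi ih =>
    rw [Finset.sum_cons]
    filter_upwards [Lp.coeFn_add (c i • f i) (∑ j ∈ s, c j • f j), Lp.coeFn_smul (c i) (f i), ih]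
      with t hadd hsmul hsum
    rw [hadd, Pi.add_apply, hsmul, hsum, Finset.sum_cons, Pi.smul_apply]

lemma ae_exists_dual_forall_apply_eq [Countable ι] {p : ℝ≥0∞} (T : X →ₗ[ℝ] Lp ℝ p μ) {C : ℝ}
    (hT : ∀ y, ∀ᵐ t ∂μ, |T y t| ≤ C * ‖y‖) (x : ι → X) :
    ∀ᵐ t ∂μ, ∃ φ : StrongDual ℝ X, ∀ i, φ (x i) = T (x i) t := by
  have hrat : ∀ᵐ t ∂μ, ∀ (s : Finset ι) (q : s → ℚ),
      ‖∑ i, (q i : ℝ) • T (x i) t‖ ≤ C * ‖∑ i, (q i : ℝ) • x i‖ := by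
    refine ae_all_iff.2 fun s => ae_all_iff.2 fun q => ?_
    filter_upwards [hT (∑ i, (q i : ℝ) • x i),
      coeFn_lp_sum_smul Finset.univ (fun i => (q i : ℝ)) fun i : s => T (x i)] with t ht hsum
    rw [← hsum]
    simpa only [map_sum, map_smul, Real.norm_eq_abs] using ht
  filter_upwards [hrat] with t ht
  exact exists_dual_forall_apply_eq fun s => norm_sum_smul_le_of_forall_rat (ht s)

lemma IsWeaklyCauchySeq.ae_exists_tendsto {x : ℕ → X} (hx : IsWeaklyCauchySeq x) {p : ℝ≥0∞}
    (T : X →ₗ[ℝ] Lp ℝ p μ) {C : ℝ} (hT : ∀ y, ∀ᵐ t ∂μ, |T y t| ≤ C * ‖y‖) :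
    ∀ᵐ t ∂μ, ∃ L : ℝ, Tendsto (fun n => T (x n) t) atTop (𝓝 L) := by
  filter_upwards [ae_exists_dual_forall_apply_eq T hT x] with t ⟨φ, hφ⟩
  simpa only [hφ] using hx φ

end PointwiseRepresentation

section LpOneDual

variable {μ : Measure Ω} [IsFiniteMeasure μ]

/-- The bilinear map `(y, f) ↦ f ⊗ y` from `X × L²(μ)` to `L¹(μ, X)`, where `f ⊗ y` is the function
`t ↦ f t • y`. It is restricted to `f ∈ L²(μ)` so that the Riesz representation theorem applies. -/
def smulConstLp (μ : Measure Ω) [IsFiniteMeasure μ] : X →L[ℝ] Lp ℝ 2 μ →L[ℝ] Lp X 1 μ :=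
  ((ContinuousLinearMap.lsmul ℝ ℝ).holderL μ 2 2 1).flip ∘L Lp.constL 2 μ ℝ

lemma coeFn_smulConstLp (y : X) (f : Lp ℝ 2 μ) :
    smulConstLp μ y f =ᵐ[μ] fun t => f t • y := by
  filter_upwards [(ContinuousLinearMap.lsmul ℝ ℝ).coeFn_holder (r := 1) f (Lp.const 2 μ y),
    Lp.coeFn_const (p := 2) (μ := μ) y] with t hholder hconst
  rw [hconst] at hholder
  exact hholder

/-- The density `T y` of the functional `f ↦ Φ (f ⊗ y)`, as a linear function of `y`. -/
def lpOneDualDensity (Φ : Lp X 1 μ →L[ℝ] ℝ) : X →ₗ[ℝ] Lp ℝ 2 μ where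
  toFun y := (InnerProductSpace.toDual ℝ (Lp ℝ 2 μ)).symm (Φ ∘L smulConstLp μ y)
  map_add' y z := by simp only [map_add, ContinuousLinearMap.comp_add]
  map_smul' c y := by simp

lemma apply_eq_integral_mul_lpOneDualDensity (Φ : Lp X 1 μ →L[ℝ] ℝ) {f : Ω → ℝ} (hf : MemLp f 2 μ)
    {y : X} {g : Lp X 1 μ} (hg : g =ᵐ[μ] fun t => f t • y) :
    Φ g = ∫ t, f t * lpOneDualDensity Φ y t ∂μ := by
  have hgf : g = smulConstLp μ y hf.toLp := by
    refine Lp.ext ?_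
    filter_upwards [hg, coeFn_smulConstLp y hf.toLp, hf.coeFn_toLp] with t hgt htensor hft
    rw [hgt, htensor, hft]
  calc Φ g = inner ℝ (lpOneDualDensity Φ y) hf.toLp := by
        rw [hgf]; exact (InnerProductSpace.toDual_symm_apply (y := Φ ∘L smulConstLp μ y)).symm
    _ = ∫ t, f t * lpOneDualDensity Φ y t ∂μ := by
        rw [L2.inner_def]
        refine integral_congr_ae ?_
        filter_upwards [hf.coeFn_toLp] with t hft
        simp [hft]

lemma lpOneDualDensity_le (Φ : Lp X 1 μ →L[ℝ] ℝ) (y : X) :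
    ∀ᵐ t ∂μ, lpOneDualDensity Φ y t ≤ ‖Φ‖ * ‖y‖ := by
  have hint : Integrable (lpOneDualDensity Φ y) μ := (Lp.memLp _).integrable one_le_two
  refine ae_le_of_forall_setIntegral_le hint (integrable_const _) fun A hA hμA => ?_
  let g : Lp X 1 μ := indicatorConstLp 1 hA hμA.ne y
  have hg : g =ᵐ[μ] fun t => A.indicator (1 : Ω → ℝ) t • y := by
    filter_upwards [indicatorConstLp_coeFn (p := 1) (hs := hA) (hμs := hμA.ne) (c := y)]
      with t ht
    rw [ht]
    by_cases htA : t ∈ A <;> simp [htA]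
  calc ∫ t in A, lpOneDualDensity Φ y t ∂μ
      = ∫ t, A.indicator 1 t * lpOneDualDensity Φ y t ∂μ := by
        simp only [← integral_indicator hA, ← indicator_mul_left, Pi.one_apply, one_mul]
    _ = Φ g := (apply_eq_integral_mul_lpOneDualDensity Φ
        (memLp_indicator_const 2 hA 1 (Or.inr hμA.ne)) hg).symm
    _ ≤ ‖Φ‖ * ‖g‖ := (le_abs_self _).trans (Φ.le_opNorm g)
    _ = ∫ _ in A, ‖Φ‖ * ‖y‖ ∂μ := by
        rw [norm_indicatorConstLp one_ne_zero ENNReal.one_ne_top, setIntegral_const, smul_eq_mul]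
        simp only [toReal_one, div_one, Real.rpow_one]
        ring

lemma abs_lpOneDualDensity_le (Φ : Lp X 1 μ →L[ℝ] ℝ) (y : X) :
    ∀ᵐ t ∂μ, |lpOneDualDensity Φ y t| ≤ ‖Φ‖ * ‖y‖ := by
  have hneg := lpOneDualDensity_le Φ (-y)
  rw [map_neg, norm_neg] at hneg
  filter_upwards [lpOneDualDensity_le Φ y, hneg, Lp.coeFn_neg (lpOneDualDensity Φ y)]
    with t hpos hneg hcoe
  rw [hcoe, Pi.neg_apply] at hneg
  exact abs_le'.2 ⟨hpos, hneg⟩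

end LpOneDual

section WeaklyNull

variable {μ : Measure Ω}

/-- The sequence `r` tends to zero weakly in `L¹(μ)`; the dual of `L¹(μ)` is represented by the
bounded functions. -/
def IsWeaklyNullSeq (μ : Measure Ω) (r : ℕ → Ω → ℝ) : Prop :=
  ∀ f : Ω → ℝ, MemLp f ∞ μ → Tendsto (fun n => ∫ t, r n t * f t ∂μ) atTop (𝓝 0)

lemma isWeaklyNullSeq_of_orthonormal [IsFiniteMeasure μ] {r : ℕ → Ω → ℝ}
    (hr : ∀ n, MemLp (r n) 2 μ) (hortho : Orthonormal ℝ fun n => (hr n).toLp) :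
    IsWeaklyNullSeq μ r := by
  intro f hf
  have hf₂ : MemLp f 2 μ := hf.mono_exponent le_top
  have hsq := (hortho.inner_products_summable (x := hf₂.toLp)).tendsto_atTop_zero
  have hnorm : Tendsto (fun n => ‖inner ℝ (hr n).toLp hf₂.toLp‖) atTop (𝓝 0) := by
    simpa only [Real.sqrt_zero, Real.sqrt_sq (norm_nonneg _)] using hsq.sqrt
  refine (tendsto_zero_iff_norm_tendsto_zero.2 hnorm).congr fun n => ?_
  rw [L2.inner_def]
  refine integral_congr_ae ?_
  filter_upwards [(hr n).coeFn_toLp, hf₂.coeFn_toLp] with t hrt hft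
  simp [hrt, hft, mul_comm]

lemma IsWeaklyNullSeq.tendsto_integral_mul [IsFiniteMeasure μ] {r f : ℕ → Ω → ℝ} {C M : ℝ}
    (hr_null : IsWeaklyNullSeq μ r) (hr_meas : ∀ n, AEStronglyMeasurable (r n) μ)
    (hr_bound : ∀ n, ∀ᵐ t ∂μ, |r n t| ≤ C) (hf_meas : ∀ n, AEStronglyMeasurable (f n) μ)
    (hf_bound : ∀ n, ∀ᵐ t ∂μ, |f n t| ≤ M)
    (hf_lim : ∀ᵐ t ∂μ, ∃ L, Tendsto (fun n => f n t) atTop (𝓝 L)) :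
    Tendsto (fun n => ∫ t, r n t * f n t ∂μ) atTop (𝓝 0) := by
  obtain ⟨h, hh_meas, hh_lim⟩ := exists_stronglyMeasurable_limit_of_tendsto_ae hf_meas hf_lim
  have hh_bound : ∀ᵐ t ∂μ, |h t| ≤ M := by
    filter_upwards [hh_lim, ae_all_iff.2 hf_bound] with t hlim hbound
    exact le_of_tendsto' hlim.abs hbound
  have hh : MemLp h ∞ μ := memLp_top_of_bound hh_meas.aestronglyMeasurable M hh_bound
  have hf (n : ℕ) : MemLp (f n) ∞ μ := memLp_top_of_bound (hf_meas n) M (hf_bound n)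
  have hr (n : ℕ) : Integrable (r n) μ := .of_bound (hr_meas n) C (hr_bound n)
  have hdiff : Tendsto (fun n => ∫ t, r n t * (f n t - h t) ∂μ) atTop (𝓝 0) := by
    rw [← integral_zero Ω ℝ (μ := μ)]
    refine tendsto_integral_of_dominated_convergence (fun _ => C * (M + M))
      (fun n => (hr_meas n).mul ((hf_meas n).sub hh_meas.aestronglyMeasurable))
      (integrable_const _) (fun n => ?_) ?_
    · filter_upwards [hr_bound n, hf_bound n, hh_bound] with t hrt hft hht
      rw [norm_mul]
      exact mul_le_mul hrt ((abs_sub _ _).trans (add_le_add hft hht)) (abs_nonneg _)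
        ((abs_nonneg _).trans hrt)
    · filter_upwards [ae_all_iff.2 hr_bound, hh_lim] with t hrt hlim
      exact bdd_le_mul_tendsto_zero' C (Eventually.of_forall hrt)
        (by simpa using hlim.sub_const (h t))
  have hsplit (n : ℕ) :
      ∫ t, r n t * f n t ∂μ = ∫ t, r n t * (f n t - h t) ∂μ + ∫ t, r n t * h t ∂μ := by
    have hsub : Integrable (fun t => r n t * (f n t - h t)) μ :=
      (hr n).mul_of_top_left ((hf n).sub hh)
    have hlimit : Integrable (fun t => r n t * h t) μ := (hr n).mul_of_top_left hh
    rw [← integral_add hsub hlimit]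
    simp only [mul_sub, sub_add_cancel]
  simpa only [hsplit, add_zero] using hdiff.add (hr_null h hh)

lemma IsWeaklyCauchySeq.tendsto_apply_smul [IsFiniteMeasure μ] {x : ℕ → X}
    (hx : IsWeaklyCauchySeq x) {r : ℕ → Ω → ℝ} {C : ℝ} (hr_null : IsWeaklyNullSeq μ r)
    (hr_meas : ∀ n, AEStronglyMeasurable (r n) μ) (hr_bound : ∀ n, ∀ᵐ t ∂μ, |r n t| ≤ C)
    {g : ℕ → Lp X 1 μ} (hg : ∀ n, g n =ᵐ[μ] fun t => r n t • x n) (Φ : Lp X 1 μ →L[ℝ] ℝ) :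
    Tendsto (fun n => Φ (g n)) atTop (𝓝 0) := by
  obtain ⟨M, hM⟩ := hx.exists_norm_le
  have hΦ (n : ℕ) : Φ (g n) = ∫ t, r n t * lpOneDualDensity Φ (x n) t ∂μ :=
    apply_eq_integral_mul_lpOneDualDensity Φ (.of_bound (hr_meas n) C (hr_bound n)) (hg n)
  have hbound (n : ℕ) : ∀ᵐ t ∂μ, |lpOneDualDensity Φ (x n) t| ≤ ‖Φ‖ * M := by
    filter_upwards [abs_lpOneDualDensity_le Φ (x n)] with t ht
    exact ht.trans (by gcongr; exact hM n)
  simp only [hΦ]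
  exact hr_null.tendsto_integral_mul hr_meas hr_bound (fun n => Lp.aestronglyMeasurable _) hbound
    (hx.ae_exists_tendsto _ (abs_lpOneDualDensity_le Φ))

end WeaklyNull

section Rademacher

lemma intervalIntegral_eq_zero_of_antiperiodic_of_periodic {E : Type*} [NormedAddCommGroup E]
    [NormedSpace ℝ E] {f : ℝ → E} {c T : ℝ} (hc : Function.Antiperiodic f c)
    (hT : Function.Periodic f T) (a : ℝ) : ∫ t in a..a + T, f t = 0 := by
  have : IsAddTorsionFree E := IsAddTorsionFree.of_isTorsionFree ℝ E
  refine self_eq_neg.1 ?_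
  calc ∫ t in a..a + T, f t = ∫ t in a + c..a + T + c, f t := by
        rw [hT.intervalIntegral_add_eq a (a + c), add_right_comm]
    _ = ∫ t in a..a + T, f (t + c) := (intervalIntegral.integral_comp_add_right f c).symm
    _ = -∫ t in a..a + T, f t := by simp only [hc _, intervalIntegral.integral_neg]

lemma rademacher_antiperiodic (n : ℕ) : Function.Antiperiodic (rademacher n) (2 ^ n)⁻¹ := by
  intro t
  have h : (2 : ℝ) ^ n * Real.pi * (t + (2 ^ n)⁻¹) = 2 ^ n * Real.pi * t + Real.pi := by
    field_simp
  rw [rademacher, rademacher, h, Real.sin_add_pi, Real.sign_neg]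

lemma rademacher_periodic {m n : ℕ} (hmn : m < n) :
    Function.Periodic (rademacher n) (2 ^ m)⁻¹ := by
  obtain ⟨k, rfl⟩ := Nat.exists_eq_add_of_lt hmn
  have hperiod : ((2 ^ k : ℕ) : ℝ) * (2 * (2 ^ (m + k + 1))⁻¹) = (2 ^ m)⁻¹ := by
    push_cast
    field_simp
    ring
  exact hperiod ▸ (rademacher_antiperiodic (m + k + 1)).nat_even_mul_periodic (2 ^ k)

lemma integral_rademacher_mul_rademacher {m n : ℕ} (hm : 0 < m) (hmn : m < n) :
    ∫ t in Icc (0 : ℝ) 1, rademacher m t * rademacher n t = 0 := by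
  have hanti : Function.Antiperiodic (fun t => rademacher m t * rademacher n t) (2 ^ m)⁻¹ :=
    fun t => by simp only [rademacher_antiperiodic m t, rademacher_periodic hmn t, neg_mul]
  have hper : Function.Periodic (fun t => rademacher m t * rademacher n t) 1 := by
    simpa using (rademacher_periodic hm).mul (rademacher_periodic (hm.trans hmn))
  rw [integral_Icc_eq_integral_Ioc, ← intervalIntegral.integral_of_le zero_le_one]
  simpa using intervalIntegral_eq_zero_of_antiperiodic_of_periodic hanti hper 0

lemma measurable_real_sign : Measurable Real.sign :=
  Measurable.ite measurableSet_Iio measurable_const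
    (Measurable.ite measurableSet_Ioi measurable_const measurable_const)

lemma measurable_rademacher (n : ℕ) : Measurable (rademacher n) :=
  measurable_real_sign.comp (by fun_prop)

lemma abs_rademacher_le_one (n : ℕ) (t : ℝ) : |rademacher n t| ≤ 1 := by
  rcases Real.sign_apply_eq (Real.sin (2 ^ n * Real.pi * t)) with h | h | h <;>
    simp [rademacher, h]

lemma ae_rademacher_eq_one_or_neg_one (n : ℕ) :
    ∀ᵐ t : ℝ, rademacher n t = 1 ∨ rademacher n t = -1 := by
  filter_upwards [(countable_range fun k : ℤ => (k : ℝ) / 2 ^ n).ae_notMem volume] with t ht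
  have hsin : Real.sin (2 ^ n * Real.pi * t) ≠ 0 := by
    intro h
    obtain ⟨k, hk⟩ := Real.sin_eq_zero_iff.1 h
    have hkt : (k : ℝ) = 2 ^ n * t := mul_right_cancel₀ Real.pi_ne_zero (by rw [hk]; ring)
    exact ht ⟨k, by simp [hkt]⟩
  exact (Real.sign_apply_eq_of_ne_zero _ hsin).symm

lemma memLp_rademacher (n : ℕ) (p : ℝ≥0∞) {μ : Measure ℝ} [IsFiniteMeasure μ] :
    MemLp (rademacher n) p μ :=
  .of_bound (measurable_rademacher n).aestronglyMeasurable 1 (ae_of_all _ (abs_rademacher_le_one n))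

lemma inner_toLp_rademacher (m n : ℕ) {μ : Measure ℝ} [IsFiniteMeasure μ] :
    inner ℝ ((memLp_rademacher m 2).toLp : Lp ℝ 2 μ) (memLp_rademacher n 2).toLp =
      ∫ t, rademacher m t * rademacher n t ∂μ := by
  rw [L2.inner_def]
  refine integral_congr_ae ?_
  filter_upwards [(memLp_rademacher m 2).coeFn_toLp, (memLp_rademacher n 2).coeFn_toLp]
    with t hm hn
  simp [hm, hn, mul_comm]

lemma orthonormal_rademacher_succ :
    Orthonormal ℝ fun n : ℕ =>
      ((memLp_rademacher (n + 1) 2).toLp : Lp ℝ 2 (volume.restrict (Icc (0 : ℝ) 1))) := by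
  refine ⟨fun n => ?_, fun m n hmn => ?_⟩
  · have hsq : ∀ᵐ t ∂volume.restrict (Icc (0 : ℝ) 1),
        rademacher (n + 1) t * rademacher (n + 1) t = 1 := by
      filter_upwards [ae_restrict_of_ae (ae_rademacher_eq_one_or_neg_one (n + 1))] with t ht
      exact mul_self_eq_one_iff.2 ht
    rw [norm_eq_sqrt_real_inner, inner_toLp_rademacher, integral_congr_ae hsq]
    simp
  · rcases hmn.lt_or_gt with h | h
    · rw [inner_toLp_rademacher, integral_rademacher_mul_rademacher m.succ_pos (by lia)]
    · rw [real_inner_comm, inner_toLp_rademacher,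
        integral_rademacher_mul_rademacher n.succ_pos (by lia)]

lemma isWeaklyNullSeq_rademacher :
    IsWeaklyNullSeq (volume.restrict (Icc (0 : ℝ) 1)) rademacher := fun f hf =>
  (tendsto_add_atTop_iff_nat 1).1 <|
    isWeaklyNullSeq_of_orthonormal (fun n => memLp_rademacher (n + 1) 2)
      orthonormal_rademacher_succ f hf

end Rademacher

lemma IsWeaklyCauchySeq.exists_tendsto_of_isDeltaSSet {μ : Measure Ω} {x : ℕ → X}
    (hx : IsWeaklyCauchySeq x) {r : ℕ → Ω → ℝ} (hr_sign : ∀ n, ∀ᵐ t ∂μ, r n t = 1 ∨ r n t = -1)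
    {g : ℕ → Lp X 1 μ} (hg : ∀ n, g n =ᵐ[μ] fun t => r n t • x n) (hδ : IsDeltaSSet μ (range g)) :
    ∃ y : X, ∀ φ : X →L[ℝ] ℝ, Tendsto (fun n => φ (x n)) atTop (𝓝 (φ y)) := by
  obtain ⟨W, hW, hgW⟩ := hδ.2 (1 / 2) one_half_pos
  refine hx.exists_tendsto_of_frequently_mem hW.union_neg (Frequently.of_forall fun n => ?_)
  have hpos : μ (g n ⁻¹' W) ≠ 0 := by
    refine ((tsub_pos_iff_lt.2 ?_).trans_le (hgW (g n) ⟨n, rfl⟩)).ne'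
    rw [ENNReal.ofReal_lt_one]
    exact one_half_lt_one
  have hfreq : ∃ᵐ t ∂μ, g n t ∈ W := frequently_ae_iff.2 hpos
  obtain ⟨t, htW, hgt, hrt⟩ := (hfreq.and_eventually ((hg n).and (hr_sign n))).exists
  rw [hgt] at htW
  rcases hrt with hrt | hrt
  · exact Or.inl (by simpa [hrt] using htW)
  · exact Or.inr (by simpa [hrt] using htW)

theorem rademacher_relWeaklyCompact_not_deltaS_general {μ : Measure Ω} [IsFiniteMeasure μ]
    {r : ℕ → Ω → ℝ} (hr_meas : ∀ n, AEStronglyMeasurable (r n) μ)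
    (hr_sign : ∀ n, ∀ᵐ t ∂μ, r n t = 1 ∨ r n t = -1) (hr_null : IsWeaklyNullSeq μ r)
    {x : ℕ → X} (hx : IsWeaklyCauchySeq x)
    (hnconv : ¬ ∃ y : X, ∀ φ : X →L[ℝ] ℝ, Tendsto (fun n => φ (x n)) atTop (𝓝 (φ y))) :
    (∀ g : ℕ → Lp X 1 μ, (∀ n, g n =ᵐ[μ] fun t => r n t • x n) →
      IsRelWeaklyCompact (range g) ∧ ¬ IsDeltaSSet μ (range g)) ∧ ¬ DeltaSProp μ X := by
  have hr_bound (n : ℕ) : ∀ᵐ t ∂μ, |r n t| ≤ 1 := by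
    filter_upwards [hr_sign n] with t ht
    rcases ht with ht | ht <;> simp [ht]
  have hseq (g : ℕ → Lp X 1 μ) (hg : ∀ n, g n =ᵐ[μ] fun t => r n t • x n) :
      IsRelWeaklyCompact (range g) ∧ ¬ IsDeltaSSet μ (range g) := by
    refine ⟨isRelWeaklyCompact_range_of_tendsto (y := 0) fun Φ => ?_, fun hδ =>
      hnconv (hx.exists_tendsto_of_isDeltaSSet hr_sign hg hδ)⟩
    simpa only [map_zero] using hx.tendsto_apply_smul hr_null hr_meas hr_bound hg Φ
  have hmem (n : ℕ) : MemLp (fun t => r n t • x n) 1 μ :=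
    (ContinuousLinearMap.toSpanSingleton ℝ (x n)).comp_memLp'
      (.of_bound (hr_meas n) 1 (hr_bound n))
  obtain ⟨hcompact, hnot⟩ := hseq (fun n => (hmem n).toLp) fun n => (hmem n).coeFn_toLp
  exact ⟨hseq, fun hX => hnot (hX _ hcompact)⟩

/-- If `(xₙ)` is weakly Cauchy but not weakly convergent in `X`, then `{rₙ xₙ : n}` is
relatively weakly compact in `L¹([0,1],X)` but not a δS-set; consequently a Banach space
which is not weakly sequentially complete fails property (δS_λ). -/
theorem rademacher_relWeaklyCompact_not_deltaS {X : Type*} [NormedAddCommGroup X]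
    [NormedSpace ℝ X] [CompleteSpace X] (x : ℕ → X)
    (hCauchy : ∀ φ : X →L[ℝ] ℝ, ∃ L : ℝ, Tendsto (fun n => φ (x n)) atTop (nhds L))
    (hnconv : ¬ ∃ y : X, ∀ φ : X →L[ℝ] ℝ, Tendsto (fun n => φ (x n)) atTop (nhds (φ y))) :
    (∀ g : ℕ → Lp X 1 (volume.restrict (Set.Icc (0 : ℝ) 1)),
      (∀ n : ℕ, (g n : ℝ → X) =ᵐ[volume.restrict (Set.Icc (0 : ℝ) 1)]
        fun t => rademacher n t • x n) →
      IsRelWeaklyCompact (Set.range g) ∧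
        ¬ IsDeltaSSet (volume.restrict (Set.Icc (0 : ℝ) 1)) (Set.range g)) ∧
    ¬ DeltaSProp (volume.restrict (Set.Icc (0 : ℝ) 1)) X :=
  rademacher_relWeaklyCompact_not_deltaS_general
    (fun n => (measurable_rademacher n).aestronglyMeasurable)
    (fun n => ae_restrict_of_ae (ae_rademacher_eq_one_or_neg_one n)) isWeaklyNullSeq_rademacher
    hCauchy hnconv
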